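/- For every L(Kh) formula φ and every LTS M = ⟨S, (R_a)_{a∈Act}, V⟩, the truth set of the formula Kh(¬φ, ⊥) in M equals S if ⟦φ⟧ = S, and equals ∅ otherwise; that is, the universal modality Aφ is definable in L(Kh) as Kh(¬φ, ⊥). -/

import Mathlib

/-!
If `φ` holds everywhere, no state satisfies `¬φ`, so every plan (for instance the empty one)
is vacuously a witness for `Kh(¬φ, ⊥)`. If `φ` fails at some `s`, a witness plan would be
strongly executable at `s`, hence would reach some state from `s` (`exists_runPlan_of_SE`);
that state would have to satisfy `⊥`, which is impossible.
-/

/-- Formulas of the logic L(Kh): p | ¬φ | φ∨ψ | Kh(φ,ψ). -/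
inductive KhForm (P : Type) : Type
  | prop : P → KhForm P
  | neg : KhForm P → KhForm P
  | or : KhForm P → KhForm P → KhForm P
  | kh : KhForm P → KhForm P → KhForm P
  deriving DecidableEq

namespace KhForm

/-- Conjunction, as the usual abbreviation. -/
def and {P : Type} (φ ψ : KhForm P) : KhForm P := .neg (.or (.neg φ) (.neg ψ))

/-- ⊥ abbreviates p ∧ ¬p for a fixed propositional symbol p. -/
def bot {P : Type} (p : P) : KhForm P := and (.prop p) (.neg (.prop p))

/-- ⊤ abbreviates ¬⊥. -/
def top {P : Type} (p : P) : KhForm P := .neg (bot p)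

/-- Number of symbols of a formula. -/
def size {P : Type} : KhForm P → ℕ
  | .prop _ => 1
  | .neg φ => size φ + 1
  | .or φ ψ => size φ + size ψ + 1
  | .kh φ ψ => size φ + size ψ + 1

end KhForm

/-- A formula is Kh-free if it contains no occurrence of Kh. -/
def KhFree {P : Type} : KhForm P → Prop
  | .prop _ => True
  | .neg φ => KhFree φ
  | .or φ ψ => KhFree φ ∧ KhFree ψ
  | .kh _ _ => False

/-- A labelled transition system over propositional symbols `P`, action symbols `A`
and states `S`: a family of binary relations on `S` and a valuation. -/
structure LTS (P A S : Type) where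
  R : A → S → S → Prop
  V : P → Set S

/-- The relation `R_π` associated to a plan (finite word over `A`):
`R_ε` is the identity and `R_{πa} = R_π ; R_a`. -/
def runPlan {P A S : Type} (M : LTS P A S) : List A → S → S → Prop
  | [] => fun s t => s = t
  | a :: π => fun s t => ∃ u, M.R a s u ∧ runPlan M π u t

/-- `R_π(X)`, the image of a set of states under a plan. -/
def planImage {P A S : Type} (M : LTS P A S) (π : List A) (X : Set S) : Set S :=
  { t | ∃ s ∈ X, runPlan M π s t }

/-- Strong executability of a plan at a state: at every step of the plan, the
next action is guaranteed to be performable. -/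
def SE {P A S : Type} (M : LTS P A S) : List A → S → Prop
  | [] => fun _ => True
  | a :: π => fun s => (∃ u, M.R a s u) ∧ ∀ u, M.R a s u → SE M π u

/-- Truth sets: `⟦Kh(φ,ψ)⟧ = S` if there is a plan π with `⟦φ⟧ ⊆ SE(π)` and
`R_π(⟦φ⟧) ⊆ ⟦ψ⟧`, and `∅` otherwise. -/
def truth {P A S : Type} (M : LTS P A S) : KhForm P → Set S
  | .prop p => M.V p
  | .neg φ => (truth M φ)ᶜ
  | .or φ ψ => truth M φ ∪ truth M ψ
  | .kh φ ψ => { _s | ∃ π : List A,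
      (∀ s ∈ truth M φ, SE M π s) ∧ planImage M π (truth M φ) ⊆ truth M ψ }

/-- π is a witness for Kh(φ,ψ) in M. -/
def IsWitness {P A S : Type} (M : LTS P A S) (π : List A) (φ ψ : KhForm P) : Prop :=
  (∀ s ∈ truth M φ, SE M π s) ∧ planImage M π (truth M φ) ⊆ truth M ψ

/-- The universal modality `Aφ`, as the abbreviation `Kh(¬φ,⊥)`. -/
def Aform {P : Type} (p : P) (φ : KhForm P) : KhForm P := .kh (.neg φ) (KhForm.bot p)

/-- The existential modality `Eφ = ¬A¬φ`. -/
def Eform {P : Type} (p : P) (φ : KhForm P) : KhForm P := .neg (Aform p (.neg φ))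

/-- Subjective formulas: Boolean combinations (¬, ∨) of positive atoms
Kh(ψ,χ) with ψ, χ Kh-free. -/
inductive Subjective {P : Type} : KhForm P → Prop
  | atom {ψ χ : KhForm P} : KhFree ψ → KhFree χ → Subjective (.kh ψ χ)
  | neg {φ : KhForm P} : Subjective φ → Subjective (.neg φ)
  | or {φ ψ : KhForm P} : Subjective φ → Subjective ψ → Subjective (.or φ ψ)

/-- Formulas of the logic L(A): p | ¬α | α∨β | Aα. -/
inductive AForm (P : Type) : Type
  | prop : P → AForm P
  | neg : AForm P → AForm P
  | or : AForm P → AForm P → AForm P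
  | all : AForm P → AForm P

/-- Truth sets for L(A) formulas over an LTS. -/
def atruth {P A S : Type} (M : LTS P A S) : AForm P → Set S
  | .prop p => M.V p
  | .neg α => (atruth M α)ᶜ
  | .or α β => atruth M α ∪ atruth M β
  | .all α => { _s | atruth M α = Set.univ }

/-- `CBar I D s t`: the pair (s,t) is in the reflexive-transitive closure (on I)
of `D̄ = (I×I) ∖ D`. -/
def CBar {ι : Type} (I : Finset ι) (D : Finset (ι × ι)) (s t : ι) : Prop :=
  s ∈ I ∧ t ∈ I ∧ Relation.ReflTransGen (fun u v => u ∈ I ∧ v ∈ I ∧ (u, v) ∉ D) s t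

/-- `ρ` occurs (as a subformula) in a formula. -/
inductive IsSubformula {P : Type} (ρ : KhForm P) : KhForm P → Prop
  | refl : IsSubformula ρ ρ
  | neg {φ : KhForm P} : IsSubformula ρ φ → IsSubformula ρ (.neg φ)
  | orL {φ ψ : KhForm P} : IsSubformula ρ φ → IsSubformula ρ (.or φ ψ)
  | orR {φ ψ : KhForm P} : IsSubformula ρ ψ → IsSubformula ρ (.or φ ψ)
  | khL {φ ψ : KhForm P} : IsSubformula ρ φ → IsSubformula ρ (.kh φ ψ)
  | khR {φ ψ : KhForm P} : IsSubformula ρ ψ → IsSubformula ρ (.kh φ ψ)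

/-- Replace all occurrences of the atom Kh(ψ,χ) by ρ. -/
def substKh {P : Type} [DecidableEq P] (ψ χ ρ : KhForm P) : KhForm P → KhForm P
  | .prop q => .prop q
  | .neg φ => .neg (substKh ψ χ ρ φ)
  | .or φ₁ φ₂ => .or (substKh ψ χ ρ φ₁) (substKh ψ χ ρ φ₂)
  | .kh φ₁ φ₂ =>
      if φ₁ = ψ ∧ φ₂ = χ then ρ
      else .kh (substKh ψ χ ρ φ₁) (substKh ψ χ ρ φ₂)

/-- ⊥ is false at every state. -/
theorem truth_bot {P A S : Type} (M : LTS P A S) (p : P) :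
    truth M (KhForm.bot p) = ∅ := by
  simp [KhForm.bot, KhForm.and, truth]

/-- A strongly executable plan never gets stuck, so it has at least one outcome. -/
theorem exists_runPlan_of_SE {P A S : Type} (M : LTS P A S) (π : List A) (s : S)
    (h : SE M π s) : ∃ t, runPlan M π s t := by
  induction π generalizing s with
  | nil => exact ⟨s, rfl⟩
  | cons a π ih =>
    obtain ⟨⟨u, hu⟩, hall⟩ := h
    obtain ⟨t, ht⟩ := ih u (hall u hu)
    exact ⟨t, u, hu, ht⟩

/-- the universal modality Aφ is definable in L(Kh) as Kh(¬φ,⊥):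
⟦Kh(¬φ,⊥)⟧ = S if ⟦φ⟧ = S, and ⟦Kh(¬φ,⊥)⟧ = ∅ otherwise. -/
theorem universal_definable_in_kh
    (P A S : Type) [Countable P] [Countable A] [Nonempty S]
    (M : LTS P A S) (p : P) (φ : KhForm P) :
    (truth M φ = Set.univ →
      truth M (KhForm.kh (.neg φ) (KhForm.bot p)) = Set.univ) ∧
    (truth M φ ≠ Set.univ →
      truth M (KhForm.kh (.neg φ) (KhForm.bot p)) = ∅) := by
  constructor
  · intro h
    ext s
    simp [truth, planImage, h]
  · intro h
    obtain ⟨s, hs⟩ := (Set.ne_univ_iff_exists_notMem _).1 h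
    refine Set.eq_empty_iff_forall_notMem.2 ?_
    rintro _ ⟨π, hSE, himg⟩
    obtain ⟨t, ht⟩ := exists_runPlan_of_SE M π s (hSE s hs)
    have hbot : t ∈ truth M (KhForm.bot p) := himg ⟨s, hs, ht⟩
    simp [truth_bot] at hbot
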